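/- For all integers n ≥ 1 and m ≥ 1, A_{n,m} strictly interlaces A_{n+1,m}: A_{n+1,m} has degree n+1 with roots a_1 < ⋯ < a_{n+1} (all real, negative, simple), A_{n,m} has degree n with roots b_1 < ⋯ < b_n, and a_1 < b_1 < a_2 < b_2 < ⋯ < b_n < a_{n+1}. -/

import Mathlib

open Polynomial

noncomputable section

/-- The polylogarithm of negative integer order: `Li_{−n}(t) = ∑_{k=1}^∞ k^n t^k`
(the `k = 0` term vanishes for `n ≥ 1`). -/
def fbhLi (n : ℕ) (t : ℂ) : ℂ := ∑' k : ℕ, (k : ℂ) ^ n * t ^ k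

/-!
Let `g n` be the rational function `A_{n,m}(t) / (1 - t) ^ (n + m + 1)`. Since
`Li_{-n-1}(t) = t * Li_{-n}'(t)`, Leibniz' rule gives `g (n + 1) = t * (g n)' + m * g n`, that is,
`(t ^ m * g n)' = t ^ (m - 1) * g (n + 1)`. The function `t ^ m * g n` vanishes at the `n` negative
roots of `A_{n,m}`, at `0` because `m ≥ 1`, and at `-∞` because `deg A_{n,m} ≤ n`. By Rolle's
theorem, `g (n + 1)`, hence `A_{n+1,m}`, has a root in each of the `n + 1` gaps between these zeros.
-/

open Filter Set Topology

lemma strictMono_snoc {α : Type*} [Preorder α] {n : ℕ} {b : Fin n → α} {c : α}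
    (hb : StrictMono b) (hbc : ∀ i, b i < c) :
    StrictMono (Fin.snoc b c : Fin (n + 1) → α) := by
  intro i j hij
  induction j using Fin.lastCases with
  | last =>
    obtain ⟨i, rfl⟩ := Fin.eq_castSucc_of_ne_last hij.ne
    simpa using hbc i
  | cast j =>
    obtain ⟨i, rfl⟩ := Fin.eq_castSucc_of_ne_last (hij.trans (Fin.castSucc_lt_last j)).ne
    simpa using hb (Fin.castSucc_lt_castSucc_iff.1 hij)

section Rolle

variable {f : ℝ → ℝ} {l : ℝ}

lemma exists_deriv_eq_zero_of_tendsto_atBot {b : ℝ} (hbot : Tendsto f atBot (𝓝 l))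
    (hb : Tendsto f (𝓝[<] b) (𝓝 l)) : ∃ c < b, deriv f c = 0 := by
  -- The substitution `s ↦ s⁻¹ + (b + 1)` maps `(-1, 0)` onto `(-∞, b)`, reversing the order.
  let φ : ℝ → ℝ := fun s ↦ s⁻¹ + (b + 1)
  have hφ_lt : ∀ s ∈ Ioo (-1 : ℝ) 0, φ s < b := fun s hs ↦ by
    have : s⁻¹ < -1 := by
      rw [inv_lt_of_neg hs.2 (by norm_num)]
      simpa using hs.1
    simp only [φ]
    linarith
  have hφ_left : Tendsto φ (𝓝[>] (-1)) (𝓝[<] b) := by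
    have hcont : ContinuousAt φ (-1) := by fun_prop (disch := norm_num)
    have hval : φ (-1) = b := by norm_num [φ]
    refine tendsto_nhdsWithin_iff.2 ⟨hval ▸ hcont.tendsto.mono_left nhdsWithin_le_nhds, ?_⟩
    filter_upwards [Ioo_mem_nhdsGT (show (-1 : ℝ) < 0 by norm_num)] with s hs using hφ_lt s hs
  have hφ_right : Tendsto φ (𝓝[<] 0) atBot :=
    tendsto_atBot_add_const_right _ _ tendsto_inv_nhdsLT_zero
  obtain ⟨s, hs, hderiv⟩ := exists_deriv_eq_zero' (f := f ∘ φ) (by norm_num)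
    (hb.comp hφ_left) (hbot.comp hφ_right)
  refine ⟨φ s, hφ_lt s hs, ?_⟩
  by_cases hf : DifferentiableAt ℝ f (φ s)
  · have hφ' : HasDerivAt φ (-(s ^ 2)⁻¹) s := (hasDerivAt_inv hs.2.ne).add_const _
    rw [(hf.hasDerivAt.comp s hφ').deriv] at hderiv
    exact (mul_eq_zero.1 hderiv).resolve_right (by simpa using hs.2.ne)
  · exact deriv_zero_of_not_differentiableAt hf

lemma exists_deriv_eq_zero_interlacing {n : ℕ} {x : Fin (n + 1) → ℝ} (hx : StrictMono x)
    (hf : ContinuousOn f (Iic (x (Fin.last n)))) (hbot : Tendsto f atBot (𝓝 l))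
    (hfx : ∀ i, f (x i) = l) :
    ∃ a : Fin (n + 1) → ℝ, (∀ i, deriv f (a i) = 0) ∧ (∀ i, a i < x i) ∧
      ∀ i : Fin n, x i.castSucc < a i.succ := by
  obtain ⟨a₀, ha₀, hderiv₀⟩ := exists_deriv_eq_zero_of_tendsto_atBot (b := x 0) hbot <| by
    have hcont := (hf (x 0) (hx.monotone (Fin.zero_le _))).tendsto
    rw [hfx] at hcont
    exact hcont.mono_left
      (nhdsWithin_mono _ (Iio_subset_Iic (hx.monotone (Fin.zero_le _))))
  have hgap (i : Fin n) : ∃ c ∈ Ioo (x i.castSucc) (x i.succ), deriv f c = 0 :=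
    exists_deriv_eq_zero (hx i.castSucc_lt_succ)
      (hf.mono (Icc_subset_Iic_self.trans (Iic_subset_Iic.2 (hx.monotone (Fin.le_last _)))))
      ((hfx _).trans (hfx _).symm)
  choose a ha hderiv using hgap
  exact ⟨Fin.cons a₀ a, Fin.cases hderiv₀ hderiv, Fin.cases ha₀ fun i ↦ (ha i).2,
    fun i ↦ (ha i).1⟩

end Rolle

section EulerStep

variable {R : Type*} [CommRing R] {m n d : ℕ}

/-- The numerator of `t * g'(t) + m * g(t)` over `(1 - t) ^ (d + 1)`, where
`g(t) = A(t) / (1 - t) ^ d`. For `d = n + m + 1` it sends `A_{n,m}` to `A_{n+1,m}`. -/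
def eulerStep (m d : ℕ) (A : R[X]) : R[X] :=
  X * (1 - X) * derivative A + (C (m : R) * (1 - X) + C (d : R) * X) * A

lemma natDegree_eulerStep_le (m d : ℕ) (A : R[X]) :
    (eulerStep m d A).natDegree ≤ A.natDegree + 1 := by
  rcases Nat.eq_zero_or_pos A.natDegree with h0 | hpos
  · rw [eulerStep, derivative_of_natDegree_zero h0, mul_zero, zero_add]
    compute_degree
    omega
  · have hA' := natDegree_derivative_le A
    unfold eulerStep
    compute_degree
    omega

variable {𝕜 : Type*} [NontriviallyNormedField 𝕜] [Algebra R 𝕜]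

lemma mul_deriv_add_eq_aeval_eulerStep_div (m d : ℕ) (A : R[X]) {t : 𝕜} (ht : 1 - t ≠ 0) :
    t * deriv (fun s : 𝕜 ↦ aeval s A / (1 - s) ^ d) t + m * (aeval t A / (1 - t) ^ d) =
      aeval t (eulerStep m d A) / (1 - t) ^ (d + 1) := by
  have hderiv := (A.hasDerivAt_aeval t).fun_div
    (((hasDerivAt_id' t).const_sub 1).fun_pow d) (pow_ne_zero _ ht)
  rw [hderiv.deriv, eulerStep]
  simp only [map_add, map_sub, map_mul, map_one, map_natCast, aeval_X]
  rcases d with _ | d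
  · simp only [pow_zero, mul_one, Nat.cast_zero, mul_zero, zero_mul, sub_zero, div_one, zero_add,
      add_zero, pow_one]
    field_simp
  · simp only [Nat.add_sub_cancel]
    field_simp
    ring

lemma deriv_pow_mul_aeval_div (hm : m ≠ 0) (A : R[X]) {t : 𝕜} (ht : 1 - t ≠ 0) :
    deriv (fun s : 𝕜 ↦ s ^ m * (aeval s A / (1 - s) ^ d)) t =
      t ^ (m - 1) * (aeval t (eulerStep m d A) / (1 - t) ^ (d + 1)) := by
  have hdiff : DifferentiableAt 𝕜 (fun s : 𝕜 ↦ aeval s A / (1 - s) ^ d) t :=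
    A.differentiableAt_aeval.fun_div (by fun_prop) (pow_ne_zero _ ht)
  rw [← mul_deriv_add_eq_aeval_eulerStep_div m d A ht,
    ((hasDerivAt_pow m t).fun_mul hdiff.hasDerivAt).deriv, ← pow_sub_one_mul hm t]
  ring

variable {A : ℝ[X]}

lemma tendsto_pow_mul_aeval_div_atBot (hd : m + A.natDegree < d) :
    Tendsto (fun s : ℝ ↦ s ^ m * (aeval s A / (1 - s) ^ d)) atBot (𝓝 0) := by
  have hden : ((1 - X : ℝ[X]) ^ d).degree = d := by
    rw [← neg_sub, ← C_1, degree_pow, degree_neg, degree_X_sub_C, nsmul_one]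
  have hnum : (X ^ m * A).natDegree < d := lt_of_le_of_lt (by compute_degree) hd
  have hlt : (X ^ m * A).degree < ((1 - X : ℝ[X]) ^ d).degree :=
    hden ▸ degree_le_natDegree.trans_lt (WithBot.coe_lt_coe.2 hnum)
  have h := div_tendsto_atBot_zero_of_degree_lt _ _ hlt
  simpa [coe_aeval_eq_eval, mul_div_assoc] using h

lemma exists_interlacing_roots_eulerStep (hm : m ≠ 0) (hd : m + A.natDegree < d)
    {b : Fin n → ℝ} (hb : StrictMono b) (hneg : ∀ i, b i < 0) (hroot : ∀ i, A.IsRoot (b i)) :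
    ∃ a : Fin (n + 1) → ℝ, StrictMono a ∧ (∀ i, a i < 0) ∧
      (∀ i, (eulerStep m d A).IsRoot (a i)) ∧
      ∀ i : Fin n, a i.castSucc < b i ∧ b i < a i.succ := by
  let f : ℝ → ℝ := fun s ↦ s ^ m * (aeval s A / (1 - s) ^ d)
  let x : Fin (n + 1) → ℝ := Fin.snoc b 0
  have hx_last : x (Fin.last n) = 0 := Fin.snoc_last ..
  have hx_castSucc (i : Fin n) : x i.castSucc = b i := Fin.snoc_castSucc ..
  have hx : StrictMono x := strictMono_snoc hb hneg
  have hf : ContinuousOn f (Iic (x (Fin.last n))) := by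
    rw [hx_last]
    refine (by fun_prop : ContinuousOn (fun s : ℝ ↦ s ^ m) _).mul
      (A.continuousOn_aeval.div (by fun_prop) fun s hs ↦ pow_ne_zero _ ?_)
    linarith [mem_Iic.1 hs]
  have hfx : ∀ i, f (x i) = 0 := by
    refine Fin.lastCases ?_ fun i ↦ ?_
    · simp [f, hx_last, hm]
    · simp [f, hx_castSucc, coe_aeval_eq_eval, (hroot i).eq_zero]
  obtain ⟨a, hderiv, ha_lt, hlt_a⟩ :=
    exists_deriv_eq_zero_interlacing hx hf (tendsto_pow_mul_aeval_div_atBot hd) hfx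
  have ha_neg (i) : a i < 0 :=
    (ha_lt i).trans_le (hx_last ▸ hx.monotone (Fin.le_last i))
  have hinter (i : Fin n) : a i.castSucc < b i ∧ b i < a i.succ :=
    ⟨hx_castSucc i ▸ ha_lt i.castSucc, hx_castSucc i ▸ hlt_a i⟩
  refine ⟨a, Fin.strictMono_iff_lt_succ.2 fun i ↦ (hinter i).1.trans (hinter i).2, ha_neg,
    fun i ↦ ?_, hinter⟩
  have h1a : 1 - a i ≠ 0 := by linarith [ha_neg i]
  have h := hderiv i
  rw [deriv_pow_mul_aeval_div hm A h1a] at h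
  simpa [(ha_neg i).ne, h1a, coe_aeval_eq_eval] using h

end EulerStep

/-- The polynomial `A_{n,m}`, built by recursion on `n` from `A_{0,m} = m!`. -/
def polylogNumerator (m : ℕ) : ℕ → ℝ[X]
  | 0 => C (m.factorial : ℝ)
  | n + 1 => eulerStep m (n + m + 1) (polylogNumerator m n)

lemma natDegree_polylogNumerator_le (m n : ℕ) : (polylogNumerator m n).natDegree ≤ n := by
  induction n with
  | zero => simp [polylogNumerator]
  | succ n ih => exact (natDegree_eulerStep_le ..).trans (Nat.succ_le_succ ih)

lemma exists_interlacing_roots_polylogNumerator {m n : ℕ} (hm : m ≠ 0) {b : Fin n → ℝ}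
    (hb : StrictMono b) (hneg : ∀ i, b i < 0) (hroot : ∀ i, (polylogNumerator m n).IsRoot (b i)) :
    ∃ a : Fin (n + 1) → ℝ, StrictMono a ∧ (∀ i, a i < 0) ∧
      (∀ i, (polylogNumerator m (n + 1)).IsRoot (a i)) ∧
      ∀ i : Fin n, a i.castSucc < b i ∧ b i < a i.succ := by
  have hdeg := natDegree_polylogNumerator_le m n
  exact exists_interlacing_roots_eulerStep hm (by omega) hb hneg hroot

lemma exists_strictMono_neg_roots_polylogNumerator {m : ℕ} (hm : m ≠ 0) (n : ℕ) :
    ∃ b : Fin n → ℝ, StrictMono b ∧ (∀ i, b i < 0) ∧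
      ∀ i, (polylogNumerator m n).IsRoot (b i) := by
  induction n with
  | zero => exact ⟨Fin.elim0, fun i ↦ i.elim0, fun i ↦ i.elim0, fun i ↦ i.elim0⟩
  | succ n ih =>
    obtain ⟨b, hb, hneg, hroot⟩ := ih
    obtain ⟨a, ha, ha_neg, ha_root, -⟩ :=
      exists_interlacing_roots_polylogNumerator hm hb hneg hroot
    exact ⟨a, ha, ha_neg, ha_root⟩

lemma eq_C_leadingCoeff_mul_prod_X_sub_C {K : Type*} [Field K] {n : ℕ} {p : K[X]}
    (hp : p.natDegree ≤ n) {a : Fin n → K} (ha : Function.Injective a)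
    (hroot : ∀ i, p.IsRoot (a i)) : p = C p.leadingCoeff * ∏ i, (X - C (a i)) := by
  apply eq_leadingCoeff_mul_of_monic_of_dvd_of_natDegree_le
  · exact monic_prod_X_sub_C _ _
  · exact Fintype.prod_dvd_of_coprime (pairwise_coprime_X_sub_C ha)
      fun i ↦ dvd_iff_isRoot.2 (hroot i)
  · simpa using hp

section Polylog

lemma iteratedDeriv_mul_deriv {𝕜 : Type*} [NontriviallyNormedField 𝕜] [CompleteSpace 𝕜]
    {f : 𝕜 → 𝕜} {t : 𝕜} (hf : AnalyticAt 𝕜 f t) (m : ℕ) :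
    iteratedDeriv m (fun s ↦ s * deriv f s) t =
      t * iteratedDeriv (m + 1) f t + m * iteratedDeriv m f t := by
  induction m generalizing t with
  | zero => simp
  | succ m ih =>
    have hev : iteratedDeriv m (fun s ↦ s * deriv f s) =ᶠ[𝓝 t]
        fun s ↦ s * iteratedDeriv (m + 1) f s + m * iteratedDeriv m f s :=
      hf.eventually_analyticAt.mono fun s hs ↦ ih hs
    have hderiv (k : ℕ) : HasDerivAt (iteratedDeriv k f) (iteratedDeriv (k + 1) f t) t := by
      rw [iteratedDeriv_succ, iteratedDeriv_eq_iterate]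
      exact (hf.iterated_deriv k).differentiableAt.hasDerivAt
    rw [iteratedDeriv_succ, hev.deriv_eq, (((hasDerivAt_id' t).fun_mul (hderiv (m + 1))).fun_add
      ((hderiv m).const_mul (m : 𝕜))).deriv]
    push_cast
    ring

lemma iteratedDeriv_inv_one_sub {𝕜 : Type*} [NontriviallyNormedField 𝕜] (m : ℕ) (t : 𝕜) :
    iteratedDeriv m (fun s ↦ (1 - s)⁻¹) t = m.factorial / (1 - t) ^ (m + 1) := by
  have h := congrFun (iter_deriv_inv_linear m (-1 : 𝕜) 1) t
  have hexp : (-1 - m : ℤ) = -((m + 1 : ℕ) : ℤ) := by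
    push_cast
    ring
  simp only [neg_one_mul, neg_add_eq_sub] at h
  rw [iteratedDeriv_eq_iterate, h, hexp, zpow_neg, zpow_natCast, div_eq_mul_inv]
  congr 1
  rw [mul_right_comm, ← mul_pow, neg_one_mul, neg_neg, one_pow, one_mul]

lemma eventually_norm_lt_one {E : Type*} [SeminormedAddGroup E] {t : E} (ht : ‖t‖ < 1) :
    ∀ᶠ s in 𝓝 t, ‖s‖ < 1 :=
  continuous_norm.continuousAt.eventually_lt_const ht

variable {t : ℂ}

lemma exists_summable_bound_pow_mul_pow (n : ℕ) (ht : ‖t‖ < 1) :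
    ∃ r > ‖t‖, ∃ u : ℕ → ℝ, Summable u ∧
      ∀ (k : ℕ), ∀ w ∈ Metric.ball (0 : ℂ) r, ‖(k : ℂ) ^ n * w ^ k‖ ≤ u k := by
  obtain ⟨r, htr, hr1⟩ := exists_between ht
  have hr : ‖r‖ < 1 := by rwa [Real.norm_of_nonneg ((norm_nonneg t).trans htr.le)]
  refine ⟨r, htr, _, summable_pow_mul_geometric_of_norm_lt_one n hr, fun k w hw ↦ ?_⟩
  rw [norm_mul, norm_pow, norm_pow, Complex.norm_natCast]
  gcongr
  exact (mem_ball_zero_iff.1 hw).le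

lemma differentiableAt_fbhLi (n : ℕ) (ht : ‖t‖ < 1) : DifferentiableAt ℂ (fbhLi n) t := by
  obtain ⟨r, htr, u, hu, hbound⟩ := exists_summable_bound_pow_mul_pow n ht
  exact (Complex.differentiableOn_tsum_of_summable_norm hu (fun k ↦ by fun_prop)
    Metric.isOpen_ball hbound).differentiableAt
    (Metric.isOpen_ball.mem_nhds (mem_ball_zero_iff.2 htr))

lemma fbhLi_succ (n : ℕ) (ht : ‖t‖ < 1) : fbhLi (n + 1) t = t * deriv (fbhLi n) t := by
  obtain ⟨r, htr, u, hu, hbound⟩ := exists_summable_bound_pow_mul_pow n ht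
  have hsum : HasSum (fun k : ℕ ↦ deriv (fun w : ℂ ↦ (k : ℂ) ^ n * w ^ k) t)
      (deriv (fbhLi n) t) :=
    Complex.hasSum_deriv_of_summable_norm hu (fun k ↦ by fun_prop) Metric.isOpen_ball hbound
      (mem_ball_zero_iff.2 htr)
  rw [← (hsum.mul_left t).tsum_eq, fbhLi]
  congr 1 with k
  rw [deriv_const_mul_field, deriv_pow_field]
  rcases k with _ | k
  · simp
  · simp only [Nat.add_sub_cancel]
    ring

lemma analyticAt_fbhLi (n : ℕ) (ht : ‖t‖ < 1) : AnalyticAt ℂ (fbhLi n) t :=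
  Complex.analyticAt_iff_eventually_differentiableAt.2 <|
    (eventually_norm_lt_one ht).mono fun _ ↦ differentiableAt_fbhLi n

lemma iteratedDeriv_fbhLi_zero (m : ℕ) (ht : ‖t‖ < 1) :
    iteratedDeriv m (fbhLi 0) t = m.factorial / (1 - t) ^ (m + 1) := by
  have hgeom : fbhLi 0 =ᶠ[𝓝 t] fun s ↦ (1 - s)⁻¹ :=
    (eventually_norm_lt_one ht).mono fun s hs ↦ by simp [fbhLi, tsum_geometric_of_norm_lt_one hs]
  rw [hgeom.iteratedDeriv_eq, iteratedDeriv_inv_one_sub]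

lemma iteratedDeriv_fbhLi_succ (m n : ℕ) (ht : ‖t‖ < 1) :
    iteratedDeriv m (fbhLi (n + 1)) t =
      t * deriv (iteratedDeriv m (fbhLi n)) t + m * iteratedDeriv m (fbhLi n) t := by
  have hsucc : fbhLi (n + 1) =ᶠ[𝓝 t] fun s ↦ s * deriv (fbhLi n) s :=
    (eventually_norm_lt_one ht).mono fun s ↦ fbhLi_succ n
  rw [hsucc.iteratedDeriv_eq, iteratedDeriv_mul_deriv (analyticAt_fbhLi n ht), iteratedDeriv_succ]

lemma iteratedDeriv_fbhLi (m n : ℕ) (ht : ‖t‖ < 1) :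
    iteratedDeriv m (fbhLi n) t = aeval t (polylogNumerator m n) / (1 - t) ^ (n + m + 1) := by
  induction n generalizing t with
  | zero => simp [iteratedDeriv_fbhLi_zero m ht, polylogNumerator]
  | succ n ih =>
    have hev : iteratedDeriv m (fbhLi n) =ᶠ[𝓝 t]
        fun s ↦ aeval s (polylogNumerator m n) / (1 - s) ^ (n + m + 1) :=
      (eventually_norm_lt_one ht).mono fun s hs ↦ ih hs
    rw [iteratedDeriv_fbhLi_succ m n ht, hev.deriv_eq, hev.eq_of_nhds,
      mul_deriv_add_eq_aeval_eulerStep_div _ _ _ (isUnit_one_sub_of_norm_lt_one ht).ne_zero,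
      polylogNumerator, show n + 1 + m + 1 = n + m + 1 + 1 by ring]

lemma eq_of_aeval_eq_of_norm_lt_one {P R : ℝ[X]}
    (h : ∀ t : ℂ, ‖t‖ < 1 → aeval t P = aeval t R) : P = R := by
  refine eq_of_infinite_eval_eq P R ((Ioo_infinite zero_lt_one).mono fun x hx ↦ ?_)
  have hx1 : ‖(x : ℂ)‖ < 1 := by
    rw [Complex.norm_real, Real.norm_of_nonneg hx.1.le]
    exact hx.2
  simpa [← Complex.coe_algebraMap, aeval_algebraMap_apply, coe_aeval_eq_eval] using h x hx1

lemma eq_polylogNumerator {m n : ℕ} {P : ℝ[X]}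
    (hP : ∀ t : ℂ, ‖t‖ < 1 →
      iteratedDeriv m (fbhLi n) t = aeval t P / (1 - t) ^ (n + m + 1)) :
    P = polylogNumerator m n := by
  refine eq_of_aeval_eq_of_norm_lt_one fun t ht ↦ ?_
  have h1t : 1 - t ≠ 0 := (isUnit_one_sub_of_norm_lt_one ht).ne_zero
  exact (div_left_inj' (pow_ne_zero _ h1t)).1 ((hP t ht).symm.trans (iteratedDeriv_fbhLi m n ht))

end Polylog

/-- For `n, m ≥ 1`, `A_{n,m}` (here `P`, of degree `n`) strictly interlaces `A_{n+1,m}`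
(here `Q`, of degree `n+1`), where `A_{n,m}` is characterized by
`(d^m/dt^m) Li_{−n}(t) = A_{n,m}(t)/(1−t)^{n+m+1}` on the unit disk: `Q` has real,
negative, simple roots `a 0 < ⋯ < a n`, `P` has real, negative, simple roots
`b 0 < ⋯ < b (n-1)`, and `a 0 < b 0 < a 1 < b 1 < ⋯ < b (n-1) < a n`. -/
theorem statement18 (n m : ℕ) (hn : 1 ≤ n) (hm : 1 ≤ m) (P Q : Polynomial ℝ)
    (hPdeg : P.natDegree = n) (hQdeg : Q.natDegree = n + 1)
    (hP : ∀ t : ℂ, ‖t‖ < 1 →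
      iteratedDeriv m (fbhLi n) t = Polynomial.aeval t P / (1 - t) ^ (n + m + 1))
    (hQ : ∀ t : ℂ, ‖t‖ < 1 →
      iteratedDeriv m (fbhLi (n + 1)) t = Polynomial.aeval t Q / (1 - t) ^ ((n + 1) + m + 1)) :
    ∃ (a : Fin (n + 1) → ℝ) (b : Fin n → ℝ), StrictMono a ∧ StrictMono b ∧
      (∀ i, a i < 0) ∧ (∀ i, b i < 0) ∧
      Q = C Q.leadingCoeff * ∏ i, (X - C (a i)) ∧
      P = C P.leadingCoeff * ∏ i, (X - C (b i)) ∧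
      ∀ i : Fin n, a i.castSucc < b i ∧ b i < a i.succ := by
  obtain rfl := eq_polylogNumerator hP
  obtain rfl := eq_polylogNumerator hQ
  have hm0 : m ≠ 0 := Nat.one_le_iff_ne_zero.1 hm
  obtain ⟨b, hb, hb_neg, hb_root⟩ := exists_strictMono_neg_roots_polylogNumerator hm0 n
  obtain ⟨a, ha, ha_neg, ha_root, hinter⟩ :=
    exists_interlacing_roots_polylogNumerator hm0 hb hb_neg hb_root
  exact ⟨a, b, ha, hb, ha_neg, hb_neg,
    eq_C_leadingCoeff_mul_prod_X_sub_C hQdeg.le ha.injective ha_root,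
    eq_C_leadingCoeff_mul_prod_X_sub_C hPdeg.le hb.injective hb_root, hinter⟩
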